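/- arXiv:2304.02395 — 2 statements merged into one kernel-verified Lean document; each statement's English description precedes it below -/
import Mathlib

section
/- Let P be a symmetric positive definite n×n real matrix, W a symmetric positive definite p×p real matrix, A an n×n real matrix, B an n×p real matrix, and a ∈ (0,1). If the symmetric block matrix M = [[aP, AᵀP, 0], [PA, P, PB], [0, BᵀP, W]] is positive semidefinite, then the block matrix [[aP, 0], [0, W]] − [A B]ᵀ P [A B] is positive semidefinite, i.e., for all ζ ∈ ℝⁿ and ω ∈ ℝᵖ: (Aζ + Bω)ᵀ P (Aζ + Bω) ≤ a ζᵀ P ζ + ωᵀ W ω. -/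
open Matrix

/-- **Schur-complement reduction of the 3×3 block LMI.** If
`M = [[aP, AᵀP, 0], [PA, P, PB], [0, BᵀP, W]]` is positive semidefinite (with `P, W`
symmetric positive definite and `a ∈ (0,1)`), then
`[[aP, 0], [0, W]] - [A B]ᵀ P [A B] ≥ 0`, i.e. for all `ζ, ω` we have
`(Aζ + Bω)ᵀ P (Aζ + Bω) ≤ a ζᵀ P ζ + ωᵀ W ω`. -/
theorem lmi_schur_reduction (n p : ℕ)
    (P : Matrix (Fin n) (Fin n) ℝ) (W : Matrix (Fin p) (Fin p) ℝ)
    (A : Matrix (Fin n) (Fin n) ℝ) (B : Matrix (Fin n) (Fin p) ℝ)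
    (a : ℝ) (ha : a ∈ Set.Ioo (0 : ℝ) 1)
    (hP : P.PosDef) (hW : W.PosDef)
    (hM : (Matrix.fromBlocks
        (Matrix.fromBlocks (a • P) (Aᵀ * P) (P * A) P)
        (Matrix.fromRows (0 : Matrix (Fin n) (Fin p) ℝ) (P * B))
        (Matrix.fromCols (0 : Matrix (Fin p) (Fin n) ℝ) (Bᵀ * P))
        W).PosSemidef) :
    ((Matrix.fromBlocks (a • P) 0 0 W)
        - (Matrix.fromCols A B)ᵀ * P * (Matrix.fromCols A B)).PosSemidef ∧
    ∀ (ζ : Fin n → ℝ) (ω : Fin p → ℝ),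
      (A *ᵥ ζ + B *ᵥ ω) ⬝ᵥ (P *ᵥ (A *ᵥ ζ + B *ᵥ ω)) ≤
        a * (ζ ⬝ᵥ (P *ᵥ ζ)) + ω ⬝ᵥ (W *ᵥ ω) := by
  have hPt : Pᵀ = P := by simpa [Matrix.IsHermitian] using hP.1
  have hWt : Wᵀ = W := by simpa [Matrix.IsHermitian] using hW.1
  have key : ∀ (ζ : Fin n → ℝ) (ω : Fin p → ℝ),
      (A *ᵥ ζ + B *ᵥ ω) ⬝ᵥ (P *ᵥ (A *ᵥ ζ + B *ᵥ ω)) ≤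
        a * (ζ ⬝ᵥ (P *ᵥ ζ)) + ω ⬝ᵥ (W *ᵥ ω) := by
    intro ζ ω
    obtain ⟨v, hv⟩ : ∃ v, v = A *ᵥ ζ + B *ᵥ ω := ⟨_, rfl⟩
    have h := hM.dotProduct_mulVec_nonneg (Sum.elim (Sum.elim ζ (-v)) ω)
    have hA : ζ ⬝ᵥ (Aᵀ *ᵥ (P *ᵥ v)) = (A *ᵥ ζ) ⬝ᵥ (P *ᵥ v) := by
      rw [dotProduct_mulVec, vecMul_transpose]
    have hB : ω ⬝ᵥ (Bᵀ *ᵥ (P *ᵥ v)) = (B *ᵥ ω) ⬝ᵥ (P *ᵥ v) := by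
      rw [dotProduct_mulVec, vecMul_transpose]
    have e1 : v ⬝ᵥ (P *ᵥ v) = (A *ᵥ ζ) ⬝ᵥ (P *ᵥ v) + (B *ᵥ ω) ⬝ᵥ (P *ᵥ v) := by
      rw [← add_dotProduct, ← hv]
    have e2 : v ⬝ᵥ (P *ᵥ v) = v ⬝ᵥ (P *ᵥ (A *ᵥ ζ)) + v ⬝ᵥ (P *ᵥ (B *ᵥ ω)) := by
      rw [← dotProduct_add, ← mulVec_add, ← hv]
    rw [← hv]
    simp only [star_trivial, fromBlocks_mulVec, fromRows_mulVec, fromCols_mulVec,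
      Sum.elim_comp_inl, Sum.elim_comp_inr, Sum.elim_add_add, sumElim_dotProduct_sumElim,
      zero_mulVec, smul_mulVec, mulVec_neg, neg_dotProduct, dotProduct_neg, dotProduct_add,
      dotProduct_zero, dotProduct_smul, smul_eq_mul, ← mulVec_mulVec, hA, hB] at h
    linarith
  refine ⟨.of_dotProduct_mulVec_nonneg ?_ ?_, key⟩
  · rw [Matrix.IsHermitian, conjTranspose_eq_transpose_of_trivial]
    simp only [transpose_sub, transpose_mul, transpose_transpose, transpose_smul, transpose_zero,
      fromBlocks_transpose, hPt, hWt, Matrix.mul_assoc]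
  · intro x
    have h := key (x ∘ Sum.inl) (x ∘ Sum.inr)
    have e : star x ⬝ᵥ (((Matrix.fromBlocks (a • P) 0 0 W)
        - (Matrix.fromCols A B)ᵀ * P * (Matrix.fromCols A B)) *ᵥ x)
        = x ⬝ᵥ (Matrix.fromBlocks (a • P) 0 0 W *ᵥ x)
          - (fromCols A B *ᵥ x) ⬝ᵥ (P *ᵥ (fromCols A B *ᵥ x)) := by
      rw [star_trivial, sub_mulVec, dotProduct_sub, Matrix.mul_assoc, ← mulVec_mulVec,
        ← mulVec_mulVec, dotProduct_mulVec x (fromCols A B)ᵀ, vecMul_transpose]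
    have e3 : x ⬝ᵥ (Matrix.fromBlocks (a • P) 0 0 W *ᵥ x)
        = a * ((x ∘ Sum.inl) ⬝ᵥ (P *ᵥ (x ∘ Sum.inl)))
          + (x ∘ Sum.inr) ⬝ᵥ (W *ᵥ (x ∘ Sum.inr)) := by
      conv_lhs => rw [← Sum.elim_comp_inl_inr x]
      simp only [fromBlocks_mulVec, Sum.elim_comp_inl, Sum.elim_comp_inr,
        sumElim_dotProduct_sumElim, zero_mulVec, smul_mulVec, dotProduct_smul, smul_eq_mul,
        add_zero, zero_add]
    rw [e, e3, fromCols_mulVec]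
    linarith
end

section
/- (Invariance of the ellipsoidal bound) Let n, p₁, …, p_N be positive naturals with N ≥ 1, let A be an n×n real matrix, Bᵢ an n×pᵢ real matrix, and Wᵢ a symmetric positive definite pᵢ×pᵢ matrix for each i = 1, …, N. Let a ∈ (0,1), a₁, …, a_N ∈ (0,1) with a₁ + … + a_N ≥ a, and let P be a symmetric positive definite n×n matrix. Set B = [B₁ … B_N] (horizontal concatenation) and W_a = diag[(1−a₁)W₁, …, (1−a_N)W_N]. Suppose the block matrix [[aP, AᵀP, 0], [PA, P, PB], [0, BᵀP, W_a]] is positive semidefinite. Then any solution ζ : ℕ → ℝⁿ of ζ(k+1) = A ζ(k) + Σᵢ Bᵢ ωᵢ(k), where for each k the disturbances satisfy ωᵢ(k)ᵀ Wᵢ ωᵢ(k) ≤ 1, satisfies ζ(k)ᵀ P ζ(k) ≤ a^{k−1} ζ(1)ᵀ P ζ(1) + (N − a)(1 − a^{k−1})/(1 − a) for all k ≥ 1. -/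
open Matrix

/-- **Invariance of the ellipsoidal bound.** Suppose the block LMI
`[[aP, AᵀP, 0], [PA, P, PB], [0, BᵀP, W_a]] ≥ 0` holds, where `B = [B₁ … B_N]` and
`W_a = diag[(1-a₁)W₁, …, (1-a_N)W_N]`, with `P, Wᵢ` symmetric positive definite,
`a, aᵢ ∈ (0,1)` and `a₁ + ⋯ + a_N ≥ a`. Then any solution of
`ζ(k+1) = A ζ(k) + Σᵢ Bᵢ ωᵢ(k)` with `ωᵢ(k)ᵀ Wᵢ ωᵢ(k) ≤ 1` satisfies
`ζ(k)ᵀ P ζ(k) ≤ a^(k-1) ζ(1)ᵀ P ζ(1) + (N - a)(1 - a^(k-1))/(1 - a)` for `k ≥ 1`. -/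
theorem ellipsoidal_reachable_set_bound
    (n N : ℕ) (hn : 0 < n) (hN : 1 ≤ N)
    (p : Fin N → ℕ) (hp : ∀ i, 0 < p i)
    (A : Matrix (Fin n) (Fin n) ℝ)
    (B : ∀ i : Fin N, Matrix (Fin n) (Fin (p i)) ℝ)
    (W : ∀ i : Fin N, Matrix (Fin (p i)) (Fin (p i)) ℝ)
    (hW : ∀ i, (W i).PosDef)
    (a : ℝ) (ha : a ∈ Set.Ioo (0 : ℝ) 1)
    (aa : Fin N → ℝ) (haa : ∀ i, aa i ∈ Set.Ioo (0 : ℝ) 1)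
    (hsum : a ≤ ∑ i, aa i)
    (P : Matrix (Fin n) (Fin n) ℝ) (hP : P.PosDef)
    (hM : (Matrix.fromBlocks
        (Matrix.fromBlocks (a • P) (Aᵀ * P) (P * A) P)
        (Matrix.fromRows (0 : Matrix (Fin n) (Σ i : Fin N, Fin (p i)) ℝ)
          (P * Matrix.of (fun r (q : Σ i : Fin N, Fin (p i)) => B q.1 r q.2)))
        (Matrix.fromCols (0 : Matrix (Σ i : Fin N, Fin (p i)) (Fin n) ℝ)
          ((Matrix.of (fun r (q : Σ i : Fin N, Fin (p i)) => B q.1 r q.2))ᵀ * P))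
        (Matrix.blockDiagonal' (fun i => (1 - aa i) • W i))).PosSemidef)
    (ζ : ℕ → Fin n → ℝ)
    (ω : ℕ → ∀ i : Fin N, Fin (p i) → ℝ)
    (hω : ∀ k i, (ω k i) ⬝ᵥ (W i *ᵥ ω k i) ≤ 1)
    (hdyn : ∀ k, ζ (k + 1) = A *ᵥ ζ k + ∑ i, B i *ᵥ ω k i) :
    ∀ k, 1 ≤ k →
      (ζ k) ⬝ᵥ (P *ᵥ ζ k) ≤
        a ^ (k - 1) * ((ζ 1) ⬝ᵥ (P *ᵥ ζ 1)) +
          ((N : ℝ) - a) * (1 - a ^ (k - 1)) / (1 - a) := by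
  obtain ⟨ha0, ha1⟩ := ha
  have step : ∀ k, (ζ (k+1)) ⬝ᵥ (P *ᵥ ζ (k+1)) ≤ a * ((ζ k) ⬝ᵥ (P *ᵥ ζ k)) + ((N : ℝ) - a) := by
    intro k
    set Bc : Matrix (Fin n) (Σ i : Fin N, Fin (p i)) ℝ :=
      Matrix.of (fun r (q : Σ i : Fin N, Fin (p i)) => B q.1 r q.2) with hBc
    let w : (Σ i : Fin N, Fin (p i)) → ℝ := fun q => ω k q.1 q.2
    have hy : ζ (k+1) = A *ᵥ ζ k + Bc *ᵥ w := by
      rw [hdyn]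
      congr 1
      ext r
      simp [Matrix.mulVec, dotProduct, Fintype.sum_sigma, hBc, w]
    have hw : w ⬝ᵥ (Matrix.blockDiagonal' (fun i => (1 - aa i) • W i) *ᵥ w)
        = ∑ i, (1 - aa i) * ((ω k i) ⬝ᵥ (W i *ᵥ ω k i)) := by
      have h1 : ∀ i (j : Fin (p i)), (Matrix.blockDiagonal' (fun i => (1 - aa i) • W i) *ᵥ w) ⟨i, j⟩
          = (1 - aa i) * (W i *ᵥ ω k i) j := by
        intro i j
        simp only [Matrix.mulVec, dotProduct, Fintype.sum_sigma]
        rw [Finset.sum_eq_single i]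
        · simp [Matrix.blockDiagonal'_apply_eq, w, Finset.mul_sum, mul_assoc]
        · intro b _ hb
          apply Finset.sum_eq_zero
          intro x _
          rw [Matrix.blockDiagonal'_apply_ne _ _ _ hb.symm, zero_mul]
        · simp
      rw [dotProduct, Fintype.sum_sigma]
      refine Finset.sum_congr rfl fun i _ => ?_
      rw [dotProduct, Finset.mul_sum]
      refine Finset.sum_congr rfl fun j _ => ?_
      rw [h1]
      simp only [w]
      ring
    have hwle : w ⬝ᵥ (Matrix.blockDiagonal' (fun i => (1 - aa i) • W i) *ᵥ w) ≤ (N : ℝ) - a := by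
      rw [hw]
      calc _ ≤ ∑ i, (1 - aa i) := by
            refine Finset.sum_le_sum fun i _ => ?_
            have := (haa i).2
            have := hω k i
            nlinarith
        _ ≤ (N : ℝ) - a := by
            rw [Finset.sum_sub_distrib]
            simp
            linarith
    have hPt : Pᵀ = P := by simpa using hP.isHermitian.eq
    have hq := hM.dotProduct_mulVec_nonneg (Sum.elim (Sum.elim (ζ k) (-ζ (k+1))) w)
    have e1 : ζ k ⬝ᵥ ((Aᵀ * P) *ᵥ ζ (k+1)) = (A *ᵥ ζ k) ⬝ᵥ (P *ᵥ ζ (k+1)) := by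
      rw [← Matrix.mulVec_mulVec, Matrix.dotProduct_mulVec, Matrix.vecMul_transpose]
    have e2 : w ⬝ᵥ ((Bcᵀ * P) *ᵥ ζ (k+1)) = (Bc *ᵥ w) ⬝ᵥ (P *ᵥ ζ (k+1)) := by
      rw [← Matrix.mulVec_mulVec, Matrix.dotProduct_mulVec, Matrix.vecMul_transpose]
    have e3 : ζ (k+1) ⬝ᵥ (P *ᵥ ζ (k+1))
        = (A *ᵥ ζ k) ⬝ᵥ (P *ᵥ ζ (k+1)) + (Bc *ᵥ w) ⬝ᵥ (P *ᵥ ζ (k+1)) := by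
      rw [← add_dotProduct, ← hy]
    have e4 : ζ (k+1) ⬝ᵥ (P *ᵥ ζ (k+1))
        = ζ (k+1) ⬝ᵥ ((P * A) *ᵥ ζ k) + ζ (k+1) ⬝ᵥ ((P * Bc) *ᵥ w) := by
      rw [← dotProduct_add, ← Matrix.mulVec_mulVec, ← Matrix.mulVec_mulVec, ← Matrix.mulVec_add,
        ← hy]
    simp only [star_trivial, Matrix.fromBlocks_mulVec, Matrix.fromRows_mulVec,
      Matrix.fromCols_mulVec, Sum.elim_comp_inl, Sum.elim_comp_inr, ← Sum.elim_add_add,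
      sumElim_dotProduct_sumElim, Matrix.mulVec_neg, Matrix.zero_mulVec, dotProduct_add,
      neg_dotProduct, dotProduct_neg, Matrix.smul_mulVec, dotProduct_smul, smul_eq_mul,
      dotProduct_zero] at hq
    linarith
  intro k hk
  obtain ⟨m, rfl⟩ := Nat.exists_eq_add_of_le' hk
  simp only [Nat.add_sub_cancel]
  have h1a : (1 - a) ≠ 0 := by linarith
  induction m with
  | zero => simp
  | succ m ih =>
    have h1 := step (m+1)
    have h2 := mul_le_mul_of_nonneg_left (ih (by omega)) ha0.le
    refine (h1.trans (add_le_add_left h2 _)).trans (le_of_eq ?_)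
    field_simp
    ring
end
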